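/- Let G = (V,D) be a graph with no isolated vertices whose edge set D is a double (2-fold) R_2-circuit, let x, y, z be three distinct technicolour vertices of G, and let G*v be the cone of G over a new vertex v, so that E(G*v) is a double R_3-circuit. Then the edges vx, vy, vz do not all belong to the same part of the principal partition of E(G*v). -/

import Mathlib

open scoped BigOperators

/-- The row of the `d`-dimensional rigidity matrix of a realisation `p : V → ℝ^d`
indexed by the (unordered) edge `e`. -/
noncomputable def rigRow (d : ℕ) {V : Type*} [DecidableEq V]
    (p : V → Fin d → ℝ) (e : Sym2 V) : V × Fin d → ℝ :=
  Sym2.lift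
    ⟨fun u v wi =>
        (((if wi.1 = u then (1 : ℝ) else 0) - (if wi.1 = v then (1 : ℝ) else 0)) *
          (p u wi.2 - p v wi.2)),
      fun u v => by funext wi; ring⟩ e

/-- A realisation is generic if the coordinates of the points form an algebraically
independent set over `ℚ`. -/
def Generic (d : ℕ) {V : Type*} (p : V → Fin d → ℝ) : Prop :=
  AlgebraicIndependent ℚ fun vi : V × Fin d => p vi.1 vi.2

/-- `rrk d p F` : the rank of the set of rows of the rigidity matrix of `(K_V, p)`
indexed by the edges in `F`.  For generic `p` this is the rank function `r_d` of
the generic `d`-dimensional rigidity matroid. -/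
noncomputable def rrk (d : ℕ) {V : Type*} [Fintype V] [DecidableEq V]
    (p : V → Fin d → ℝ) (F : Set (Sym2 V)) : ℕ :=
  Module.finrank ℝ (Submodule.span ℝ (rigRow d p '' F))

/-- `D` is a `k`-fold circuit (with respect to the realisation `p`) :
`r (D \ {f}) = r D` for every `f ∈ D`, and `r D = |D| - k`. -/
def IsKFoldCircuit (d : ℕ) {V : Type*} [Fintype V] [DecidableEq V]
    (p : V → Fin d → ℝ) (D : Finset (Sym2 V)) (k : ℕ) : Prop :=
  (∀ f ∈ D, rrk d p (↑D \ {f}) = rrk d p ↑D) ∧ rrk d p ↑D + k = D.card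

/-- An `R_d`-circuit: `r C = |C| - 1` and `r (C \ {f}) = r C` for all `f ∈ C`. -/
def IsCircuit (d : ℕ) {V : Type*} [Fintype V] [DecidableEq V]
    (p : V → Fin d → ℝ) (C : Finset (Sym2 V)) : Prop :=
  IsKFoldCircuit d p C 1

/-- `A` is a part of the principal partition of the `k`-fold circuit `D`:
the parts are the sets `D \ B` where `B` runs over the `(k-1)`-fold circuits
contained in `D`. -/
def IsPrincipalPart (d : ℕ) {V : Type*} [Fintype V] [DecidableEq V]
    (p : V → Fin d → ℝ) (D : Finset (Sym2 V)) (k : ℕ) (A : Finset (Sym2 V)) : Prop :=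
  ∃ B ⊆ D, IsKFoldCircuit d p B (k - 1) ∧ A = D \ B

/-- Closure in the rigidity matroid: all edges of `K_V` whose addition to `F`
does not increase the rank. -/
def rcl (d : ℕ) {V : Type*} [Fintype V] [DecidableEq V]
    (p : V → Fin d → ℝ) (F : Set (Sym2 V)) : Set (Sym2 V) :=
  {e | ¬ e.IsDiag ∧ rrk d p (insert e F) = rrk d p F}

/-- A `k`-fold circuit `D` with principal partition `A_1, …, A_ℓ` is balanced if
`r_d (⋂ i, cl_d (D \ A_i)) = ℓ - k`. -/
def IsBalanced (d : ℕ) {V : Type*} [Fintype V] [DecidableEq V]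
    (p : V → Fin d → ℝ) (D : Finset (Sym2 V)) (k : ℕ) : Prop :=
  rrk d p (⋂ A ∈ {A | IsPrincipalPart d p D k A}, rcl d p ↑(D \ A)) + k =
    Set.ncard {A | IsPrincipalPart d p D k A}

/-- A vertex is monochromatic if all edges of `D` incident with it lie in a single
part of the principal partition (and technicolour otherwise). -/
def Monochromatic (d : ℕ) {V : Type*} [Fintype V] [DecidableEq V]
    (p : V → Fin d → ℝ) (D : Finset (Sym2 V)) (k : ℕ) (w : V) : Prop :=
  ∃ A, IsPrincipalPart d p D k A ∧ ∀ e ∈ D, w ∈ e → e ∈ A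

/-- The graph `(W, E)` is `R_d`-rigid: it is a complete graph on at most `d+1`
vertices, or `r_d(E) = d|W| - (d+1 choose 2)`. -/
def IsRigidOn (d : ℕ) {V : Type*} [Fintype V] [DecidableEq V]
    (p : V → Fin d → ℝ) (W : Finset V) (E : Finset (Sym2 V)) : Prop :=
  (W.card ≤ d + 1 ∧ ∀ u ∈ W, ∀ w ∈ W, u ≠ w → s(u, w) ∈ E) ∨
    (rrk d p ↑E : ℤ) + ((d + 1).choose 2 : ℤ) = (d : ℤ) * (W.card : ℤ)

/-- The edge set of the cone of (the graph with edge set) `D` over a new vertex,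
realised as `none : Option V`. -/
def coneEdges {V : Type*} [Fintype V] [DecidableEq V] (D : Finset (Sym2 V)) :
    Finset (Sym2 (Option V)) :=
  D.image (Sym2.map Option.some) ∪
    Finset.univ.image fun u : V => s((Option.some u : Option V), (none : Option V))

/-- The degree of the vertex `w` in the edge set `D`. -/
def degIn {V : Type*} [Fintype V] [DecidableEq V] (D : Finset (Sym2 V)) (w : V) : ℕ :=
  (D.filter fun e => w ∈ e).card

/-- The set of vertices incident with an edge of `F`. -/
def esupp {V : Type*} [Fintype V] [DecidableEq V] (F : Finset (Sym2 V)) : Finset V :=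
  Finset.univ.filter fun w => ∃ e ∈ F, w ∈ e

/-!
Move the cone to the realisation with apex at the origin and `u` at `(1, p u) / s u`. Stresses of
this framework project to stresses `l` of `(D, p)`, and the stress on the edge from `u` to the apex
becomes, up to a nonzero factor, the Laplacian of `l` at `u` evaluated at `s`. Suppose the cone
edges at the technicolour vertices `T` all lie in one part; the complement of that part is a circuit
avoiding them. Specialising it gives, for every `s`, a nonzero `l` whose Laplacians at the vertices
of `T` all vanish at `s`. The stress space of `D` is two-dimensional and, by technicolourity, a
stress is determined by its restriction to the star of any vertex of `T`; hence the Laplacians at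
the vertices of `T` are nonzero multiples of one another.

Count the common neighbours of `T` in two ways. Some nonzero stress has vanishing sum on the star of
a chosen `x ∈ T`; it is supported there on common neighbours, which thus carry an affine relation,
so there are at least `d + 2` of them. On the other hand each common neighbour `w` forms with `T`
an affine circuit, whose rank-one stress uses only edges of `D` and edges inside `T`. With more than
`(d + 1).choose 2` common neighbours some combination of these stresses vanishes inside `T`, and
proportionality then places each `w` involved at the same affine combination of the points of `T`.
So only one `w` is involved, whose rank-one stress does not vanish inside `T`. For `d ≤ 2` the two
bounds are incompatible.
-/

section LinearRelations

variable {K ι M : Type*} [Field K] [Fintype ι] [AddCommGroup M] [Module K M]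

/-- The space of linear relations among the vectors `v i`, `i ∈ D`. A relation is encoded as a
coefficient function on all of `ι` that vanishes outside `D`. -/
def relationsOn (K : Type*) {ι M : Type*} [Field K] [Fintype ι] [AddCommGroup M] [Module K M]
    (v : ι → M) (D : Finset ι) : Submodule K (ι → K) :=
  Submodule.pi (↑D)ᶜ (fun _ => ⊥) ⊓ LinearMap.ker (Fintype.linearCombination K v)

theorem mem_relationsOn {v : ι → M} {D : Finset ι} {g : ι → K} :
    g ∈ relationsOn K v D ↔ (∀ i ∉ D, g i = 0) ∧ ∑ i, g i • v i = 0 := by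
  simp [relationsOn, Submodule.mem_pi, Fintype.linearCombination_apply]

theorem relationsOn_mono {v : ι → M} {D E : Finset ι} (h : D ⊆ E) :
    relationsOn K v D ≤ relationsOn K v E := fun _ hg =>
  mem_relationsOn.2 ⟨fun i hi => (mem_relationsOn.1 hg).1 i fun hD => hi (h hD),
    (mem_relationsOn.1 hg).2⟩

theorem relationsOn_eq_map_ker (v : ι → M) (D : Finset ι) :
    relationsOn K v D =
      (LinearMap.ker (Fintype.linearCombination K fun i : D => v i)).map
        (Function.ExtendByZero.linearMap K ((↑) : D → ι)) := by
  have hsum : ∀ g : ι → K, (∀ i ∉ D, g i = 0) → ∑ i, g i • v i = ∑ i : D, g i • v i := by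
    intro g hg
    rw [Finset.sum_coe_sort D fun i => g i • v i]
    exact (Finset.sum_subset (Finset.subset_univ D) fun i _ hi => by rw [hg i hi, zero_smul]).symm
  have hext : ∀ c : D → K, ∀ i ∉ D, Function.ExtendByZero.linearMap K ((↑) : D → ι) c i = 0 :=
    fun c i hi => Function.extend_apply' _ _ _ (by rintro ⟨j, rfl⟩; exact hi j.2)
  ext g
  rw [mem_relationsOn, Submodule.mem_map]
  constructor
  · rintro ⟨hsupp, hg⟩
    refine ⟨fun i => g i, ?_, funext fun i => ?_⟩
    · rwa [LinearMap.mem_ker, Fintype.linearCombination_apply, ← hsum g hsupp]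
    · by_cases hi : i ∈ D
      · exact Subtype.val_injective.extend_apply (fun i : D => g i) 0 ⟨i, hi⟩
      · rw [hsupp i hi]
        exact hext _ i hi
  · rintro ⟨c, hc, rfl⟩
    refine ⟨hext c, ?_⟩
    rw [hsum _ (hext c)]
    simpa [Fintype.linearCombination_apply, Subtype.val_injective.extend_apply] using hc

theorem finrank_span_image_add_finrank_relationsOn (v : ι → M) (D : Finset ι) :
    Module.finrank K (Submodule.span K (v '' D)) + Module.finrank K (relationsOn K v D) =
      D.card := by
  have hinj : Function.Injective (Function.ExtendByZero.linearMap K ((↑) : D → ι)) :=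
    Function.extend_injective Subtype.val_injective _
  have hrange : Submodule.span K (v '' D) =
      LinearMap.range (Fintype.linearCombination K fun i : D => v i) := by
    rw [Fintype.range_linearCombination, Set.image_eq_range]
    rfl
  rw [relationsOn_eq_map_ker, ← (Submodule.equivMapOfInjective _ hinj _).finrank_eq, hrange,
    LinearMap.finrank_range_add_finrank_ker, Module.finrank_fintype_fun_eq_card,
    Fintype.card_coe]

theorem relationsOn_eq_bot_iff {v : ι → M} {D : Finset ι} :
    relationsOn K v D = ⊥ ↔ LinearIndepOn K v (D : Set ι) := by
  have hrank := finrank_span_image_add_finrank_relationsOn (K := K) v D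
  rw [← Submodule.finrank_eq_zero, LinearIndepOn, linearIndependent_iff_card_eq_finrank_span,
    Set.finrank, ← Set.image_eq_range]
  simp only [Finset.coe_sort_coe, Fintype.card_coe]
  omega

theorem relationsOn_ne_bot_of_finrank_lt_card [FiniteDimensional K M] {v : ι → M} {D : Finset ι}
    (h : Module.finrank K M < D.card) : relationsOn K v D ≠ ⊥ := by
  intro hbot
  have hrank := finrank_span_image_add_finrank_relationsOn (K := K) v D
  rw [hbot, finrank_bot, add_zero] at hrank
  exact h.not_ge (hrank ▸ Submodule.finrank_le _)

theorem exists_mem_relationsOn_forall_ne_zero [DecidableEq ι] [FiniteDimensional K M] {v : ι → M}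
    {D : Finset ι} (hcard : Module.finrank K M < D.card)
    (hindep : ∀ i ∈ D, LinearIndepOn K v (D.erase i : Set ι)) :
    ∃ g ∈ relationsOn K v D, ∀ i ∈ D, g i ≠ 0 := by
  obtain ⟨g, hg, hg0⟩ :=
    Submodule.exists_mem_ne_zero_of_ne_bot (relationsOn_ne_bot_of_finrank_lt_card hcard)
  refine ⟨g, hg, fun i hi hgi => hg0 ?_⟩
  rw [← Submodule.mem_bot K, ← relationsOn_eq_bot_iff.2 (hindep i hi), mem_relationsOn]
  refine ⟨fun j hj => ?_, (mem_relationsOn.1 hg).2⟩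
  by_cases hji : j = i
  · rw [hji, hgi]
  · exact (mem_relationsOn.1 hg).1 j fun hjD => hj (Finset.mem_erase.2 ⟨hji, hjD⟩)

end LinearRelations

section ParallelMaps

variable {K E F : Type*} [Field K] [AddCommGroup E] [Module K E] [AddCommGroup F] [Module K F]

theorem not_linearIndependent_pair_of_apply_eq_zero [FiniteDimensional K E]
    (hE : Module.finrank K E = 2) {φ ψ : Module.Dual K E} {l : E} (hl : l ≠ 0)
    (hφ : φ l = 0) (hψ : ψ l = 0) : ¬ LinearIndependent K ![φ, ψ] := by
  intro hind
  have hspan := hind.span_eq_top_of_card_eq_finrank (by simp [hE])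
  refine hl ((Module.forall_dual_apply_eq_zero_iff K l).1 fun χ => ?_)
  have hχ : χ ∈ Submodule.span K (Set.range ![φ, ψ]) := hspan ▸ Submodule.mem_top
  rw [Matrix.range_cons_cons_empty, Submodule.mem_span_pair] at hχ
  obtain ⟨a, b, rfl⟩ := hχ
  simp [hφ, hψ]

theorem exists_eq_smul_of_forall_not_linearIndependent {f g : E →ₗ[K] F}
    (hf : Function.Surjective f) (hF : 1 < Module.finrank K F)
    (h : ∀ s, ¬ LinearIndependent K ![f s, g s]) : ∃ c : K, g = c • f := by
  have hker : ∀ v, f v = 0 → g v = 0 := by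
    intro v hv
    by_contra hgv
    obtain ⟨y, hy⟩ : ∃ y, y ∉ Submodule.span K {g v} := by
      by_contra! htop
      have hle := finrank_span_le_card (R := K) ({g v} : Set F)
      rw [(Submodule.eq_top_iff'.2 htop), finrank_top] at hle
      simp at hle
      omega
    obtain ⟨w, rfl⟩ := hf y
    have hfw : f w ≠ 0 := fun h0 => hy (h0 ▸ Submodule.zero_mem _)
    have hspan : ∀ u, f u = f w → g u ∈ Submodule.span K {f w} := by
      intro u hu
      have hdep := h u
      rw [hu, LinearIndependent.pair_iff' hfw] at hdep
      push Not at hdep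
      exact Submodule.mem_span_singleton.2 hdep
    have hgv_mem : g v ∈ Submodule.span K {f w} := by
      simpa using Submodule.sub_mem _ (hspan (w + v) (by simp [hv])) (hspan w rfl)
    obtain ⟨a, ha⟩ := Submodule.mem_span_singleton.1 hgv_mem
    have ha0 : a ≠ 0 := by rintro rfl; exact hgv (by simpa using ha.symm)
    exact hy (Submodule.mem_span_singleton.2 ⟨a⁻¹, by rw [← ha, inv_smul_smul₀ ha0]⟩)
  obtain ⟨r, hr⟩ := f.exists_rightInverse_of_surjective (LinearMap.range_eq_top.2 hf)
  have hfr : ∀ y, f (r y) = y := LinearMap.congr_fun hr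
  obtain ⟨c, hc⟩ := LinearMap.exists_eq_smul_id_of_forall_notLinearIndependent
    (f := g ∘ₗ r) fun y => by simpa [hfr] using h (r y)
  refine ⟨c, LinearMap.ext fun s => ?_⟩
  have hgs : g (s - r (f s)) = 0 := hker _ (by rw [map_sub, hfr, sub_self])
  rw [map_sub, sub_eq_zero] at hgs
  simpa [hgs] using LinearMap.congr_fun hc (f s)

end ParallelMaps

section Genericity

open Matrix in
theorem linearIndependent_row_iff_det_mul_transpose_ne_zero {m n : Type*} [Fintype m]
    [DecidableEq m] [Fintype n] (A : Matrix m n ℝ) :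
    LinearIndependent ℝ A.row ↔ (A * Aᵀ).det ≠ 0 := by
  rw [← vecMul_injective_iff, ← isUnit_iff_ne_zero, ← isUnit_iff_isUnit_det,
    ← vecMul_injective_iff_isUnit, ← coe_vecMulLinear, ← coe_vecMulLinear,
    injective_iff_map_eq_zero, injective_iff_map_eq_zero]
  simp only [vecMulLinear_apply, ← conjTranspose_eq_transpose_of_trivial,
    vecMul_self_mul_conjTranspose_eq_zero]

theorem linearIndepOn_aeval_of_algebraicIndependent {σ ι κ : Type*} [Finite κ] {a : σ → ℝ}
    (ha : AlgebraicIndependent ℚ a) {b : σ → ℝ} {f : ι → κ → MvPolynomial σ ℚ} {D : Finset ι}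
    (h : LinearIndepOn ℝ (fun i k => MvPolynomial.aeval b (f i k)) (D : Set ι)) :
    LinearIndepOn ℝ (fun i k => MvPolynomial.aeval a (f i k)) (D : Set ι) := by
  classical
  cases nonempty_fintype κ
  -- Independence of the rows is nonvanishing of a Gram determinant, a polynomial over `ℚ`.
  let A : Matrix D κ (MvPolynomial σ ℚ) := .of fun i => f i
  have hdet : ∀ r : σ → ℝ, LinearIndepOn ℝ (fun i k => MvPolynomial.aeval r (f i k)) (D : Set ι) ↔
      MvPolynomial.aeval r (A * A.transpose).det ≠ 0 := by
    intro r
    rw [AlgHom.map_det, AlgHom.mapMatrix_apply, Matrix.map_mul, Matrix.transpose_map,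
      ← linearIndependent_row_iff_det_mul_transpose_ne_zero]
    rfl
  rw [hdet] at h ⊢
  rw [map_ne_zero_iff _ ha]
  exact fun h0 => h (by rw [h0, map_zero])

theorem Generic.linearIndepOn_rigRow {d : ℕ} {V : Type*} [Finite V] [DecidableEq V]
    {p q : V → Fin d → ℝ} (hp : Generic d p) {D : Finset (Sym2 V)}
    (h : LinearIndepOn ℝ (rigRow d q) (D : Set (Sym2 V))) :
    LinearIndepOn ℝ (rigRow d p) (D : Set (Sym2 V)) := by
  have hpoly : ∀ (e : Sym2 V) (ui : V × Fin d), ∃ f : MvPolynomial (V × Fin d) ℚ,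
      ∀ r : V → Fin d → ℝ, rigRow d r e ui = MvPolynomial.aeval (fun vi => r vi.1 vi.2) f := by
    refine fun e => e.ind fun u w ui =>
      ⟨((if ui.1 = u then 1 else 0) - (if ui.1 = w then 1 else 0)) *
        (.X (u, ui.2) - .X (w, ui.2)), fun r => ?_⟩
    simp only [rigRow, Sym2.lift_mk, map_mul, map_sub, MvPolynomial.aeval_X]
    split_ifs <;> simp
  choose f hf using hpoly
  have hrow : ∀ r : V → Fin d → ℝ,
      rigRow d r = fun e ui => MvPolynomial.aeval (fun vi => r vi.1 vi.2) (f e ui) :=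
    fun r => funext₂ fun e ui => hf e ui r
  rw [hrow] at h ⊢
  exact linearIndepOn_aeval_of_algebraicIndependent hp h

/-- Homogeneous coordinates `(1, p v)` of the points of a realisation; linear relations among them
are affine relations among the points. -/
def homogenize {d : ℕ} {V : Type*} (p : V → Fin d → ℝ) (v : V) : Fin (d + 1) → ℝ :=
  Matrix.vecCons 1 (p v)

theorem mem_relationsOn_homogenize {d : ℕ} {V : Type*} [Fintype V] {p : V → Fin d → ℝ}
    {N : Finset V} {g : V → ℝ} :
    g ∈ relationsOn ℝ (homogenize p) N ↔
      (∀ v ∉ N, g v = 0) ∧ ∑ v, g v = 0 ∧ ∀ i, ∑ v, g v * p v i = 0 := by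
  simp [mem_relationsOn, funext_iff, Fin.forall_fin_succ, homogenize]

theorem linearIndepOn_homogenize_momentCurve {d : ℕ} {V : Type*} {t : V → ℝ} (ht : t.Injective)
    {N : Finset V} (hN : N.card ≤ d + 1) :
    LinearIndepOn ℝ (homogenize fun v (i : Fin d) => t v ^ (i + 1 : ℕ)) (N : Set V) := by
  have hpow : ∀ v (i : Fin (d + 1)),
      homogenize (fun v (i : Fin d) => t v ^ (i + 1 : ℕ)) v i = t v ^ (i : ℕ) :=
    fun v => Fin.cases (by simp [homogenize]) fun i => by simp [homogenize]
  refine (linearIndependent_equiv N.equivFin.symm).1 (Fintype.linearIndependent_iff.2 ?_)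
  intro c hc
  refine congrFun (Matrix.eq_zero_of_forall_pow_sum_mul_pow_eq_zero
    (f := fun j => t (N.equivFin.symm j))
    (ht.comp (Subtype.val_injective.comp N.equivFin.symm.injective)) fun i => ?_)
  simpa [hpow] using congrFun hc (Fin.castLE hN i)

theorem Generic.linearIndepOn_homogenize {d : ℕ} {V : Type*} [Countable V]
    {p : V → Fin d → ℝ} (hp : Generic d p) {N : Finset V} (hN : N.card ≤ d + 1) :
    LinearIndepOn ℝ (homogenize p) (N : Set V) := by
  have hrow : ∀ r : V → Fin d → ℝ, homogenize r = fun v i =>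
      MvPolynomial.aeval (fun vi : V × Fin d => r vi.1 vi.2)
        (Matrix.vecCons 1 (fun i => .X (v, i)) i : MvPolynomial (V × Fin d) ℚ) :=
    fun r => funext fun v => funext <| Fin.cases (by simp [homogenize]) fun i => by
      simp [homogenize]
  obtain ⟨t, ht⟩ := exists_injective_nat V
  have hmoment := linearIndepOn_homogenize_momentCurve (Nat.cast_injective.comp ht) hN
  rw [hrow] at hmoment ⊢
  exact linearIndepOn_aeval_of_algebraicIndependent hp hmoment

theorem Generic.exists_mem_relationsOn_homogenize_forall_ne_zero {d : ℕ} {V : Type*} [Fintype V]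
    {p : V → Fin d → ℝ} (hp : Generic d p) {A : Finset V} (hA : A.card = d + 2) :
    ∃ g ∈ relationsOn ℝ (homogenize p) A, ∀ v ∈ A, g v ≠ 0 := by
  classical
  refine exists_mem_relationsOn_forall_ne_zero (by rw [Module.finrank_fin_fun, hA]; omega)
    fun v hv => hp.linearIndepOn_homogenize ?_
  rw [Finset.card_erase_of_mem hv, hA]
  omega

end Genericity

section Stresses

variable {V : Type*} [Fintype V]

/-- The Laplacian at the vertex `u` of the graph with edge weights `l`, evaluated at `s : V → ℝ`.
For a stress `l` it vanishes on each coordinate function of the realisation. -/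
noncomputable def weightedLaplacian (u : V) : (Sym2 V → ℝ) →ₗ[ℝ] (V → ℝ) →ₗ[ℝ] ℝ :=
  LinearMap.mk₂ ℝ (fun l s => ∑ w, l s(u, w) * (s u - s w))
    (fun l l' s => by simp [add_mul, Finset.sum_add_distrib])
    (fun c l s => by simp [Finset.mul_sum, mul_assoc])
    (fun l s s' => by simp only [Pi.add_apply, ← Finset.sum_add_distrib]; congr! 1; ring)
    (fun c l s => by simp only [Pi.smul_apply, smul_eq_mul, Finset.mul_sum]; congr! 1; ring)

theorem weightedLaplacian_apply (u : V) (l : Sym2 V → ℝ) (s : V → ℝ) :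
    weightedLaplacian u l s = ∑ w, l s(u, w) * (s u - s w) :=
  rfl

theorem weightedLaplacian_const (u : V) (l : Sym2 V → ℝ) (t : ℝ) :
    weightedLaplacian u l (fun _ => t) = 0 := by
  simp [weightedLaplacian_apply]

theorem weightedLaplacian_single_of_ne [DecidableEq V] {u w : V} (h : w ≠ u) (l : Sym2 V → ℝ) :
    weightedLaplacian u l (Pi.single w 1) = -l s(u, w) := by
  simp [weightedLaplacian_apply, Pi.single_apply, h.symm]

theorem apply_eq_mul_of_weightedLaplacian_eq_smul {l : Sym2 V → ℝ} {c : ℝ} {u x w : V}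
    (hlap : weightedLaplacian u l = c • weightedLaplacian x l) (hwu : w ≠ u) (hwx : w ≠ x) :
    l s(u, w) = c * l s(x, w) := by
  classical
  have h := LinearMap.congr_fun hlap (Pi.single w 1)
  rw [LinearMap.smul_apply, weightedLaplacian_single_of_ne hwu,
    weightedLaplacian_single_of_ne hwx, smul_eq_mul] at h
  linarith

variable [DecidableEq V] {d : ℕ}

/-- The space of equilibrium stresses of the framework with realisation `p` and edge set `D`: the
row dependencies of its rigidity matrix, extended by zero to all pairs of vertices. -/
noncomputable abbrev stressSpace (d : ℕ) (p : V → Fin d → ℝ) (D : Finset (Sym2 V)) :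
    Submodule ℝ (Sym2 V → ℝ) :=
  relationsOn ℝ (rigRow d p) D

theorem sum_smul_rigRow_apply (p : V → Fin d → ℝ) (l : Sym2 V → ℝ) (u : V) (i : Fin d) :
    (∑ e, l e • rigRow d p e) (u, i) = weightedLaplacian u l fun v => p v i := by
  rw [weightedLaplacian_apply, Finset.sum_apply]
  have hinj : Function.Injective fun w : V => s(u, w) := fun _ _ => Sym2.congr_right.1
  have hsupp : ∀ e ∉ Finset.univ.image fun w : V => s(u, w),
      (l e • rigRow d p e) (u, i) = 0 := by
    refine fun e => e.ind fun a b he => ?_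
    have ha : u ≠ a := by rintro rfl; exact he (by simp)
    have hb : u ≠ b := by rintro rfl; exact he (by simp [Sym2.eq_swap])
    simp [rigRow, ha, hb]
  rw [← Finset.sum_subset (Finset.subset_univ _) fun e _ => hsupp e,
    Finset.sum_image hinj.injOn]
  refine Finset.sum_congr rfl fun w _ => ?_
  rcases eq_or_ne u w with rfl | h <;> simp [rigRow, *]

theorem mem_stressSpace {p : V → Fin d → ℝ} {D : Finset (Sym2 V)} {l : Sym2 V → ℝ} :
    l ∈ stressSpace d p D ↔
      (∀ e ∉ D, l e = 0) ∧ ∀ u i, weightedLaplacian u l (fun v => p v i) = 0 := by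
  simp only [mem_relationsOn, funext_iff, Prod.forall, sum_smul_rigRow_apply, Pi.zero_apply]

theorem rrk_add_finrank_stressSpace (p : V → Fin d → ℝ) (D : Finset (Sym2 V)) :
    rrk d p D + Module.finrank ℝ (stressSpace d p D) = D.card :=
  finrank_span_image_add_finrank_relationsOn _ _

theorem stressSpace_eq_bot_iff_rrk {p : V → Fin d → ℝ} {D : Finset (Sym2 V)} :
    stressSpace d p D = ⊥ ↔ rrk d p D = D.card := by
  have := rrk_add_finrank_stressSpace p D
  rw [← Submodule.finrank_eq_zero]
  omega

/-- The rank-one stress `{u, v} ↦ -g u * g v`; it is an equilibrium stress when `g` is an affine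
relation among the points of the realisation. -/
def rankOneStress (g : V → ℝ) (e : Sym2 V) : ℝ :=
  if e.IsDiag then 0 else -(e.map g).mul

theorem rankOneStress_mk_of_ne {V : Type*} [DecidableEq V] (g : V → ℝ) {u v : V} (h : u ≠ v) :
    rankOneStress g s(u, v) = -(g u * g v) := by
  simp [rankOneStress, h]

theorem weightedLaplacian_rankOneStress {g : V → ℝ} (hg : ∑ v, g v = 0) (u : V) (s : V → ℝ) :
    weightedLaplacian u (rankOneStress g) s = g u * ∑ v, g v * s v := by
  have hterm : ∀ w, rankOneStress g s(u, w) * (s u - s w) =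
      g u * (g w * s w) - g u * s u * g w := by
    intro w
    rcases eq_or_ne u w with rfl | h
    · ring
    · simp [rankOneStress, h]; ring
  simp only [weightedLaplacian_apply, hterm, Finset.sum_sub_distrib, ← Finset.mul_sum, hg, mul_zero,
    sub_zero]

end Stresses

section Circuits

variable {V : Type*} [Fintype V] [DecidableEq V] {d : ℕ} {p : V → Fin d → ℝ}
  {D : Finset (Sym2 V)}

theorem exists_isCircuit_subset (hD : stressSpace d p D ≠ ⊥) : ∃ B ⊆ D, IsCircuit d p B := by
  obtain ⟨B, hBD, hB⟩ :=
    exists_minimal_le_of_wellFoundedLT (fun B => stressSpace d p B ≠ ⊥) D hD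
  have hrank : rrk d p B < B.card := by
    have hne := stressSpace_eq_bot_iff_rrk.not.1 hB.prop
    have := rrk_add_finrank_stressSpace p B
    omega
  have herase : ∀ f ∈ B, rrk d p (↑B \ {f}) + 1 = B.card := by
    intro f hf
    have hbot := not_not.1 (hB.not_prop_of_lt (Finset.erase_ssubset hf))
    rw [← Finset.coe_erase, stressSpace_eq_bot_iff_rrk.1 hbot, Finset.card_erase_add_one hf]
  have hmono : ∀ f, rrk d p (↑B \ {f}) ≤ rrk d p B := fun f =>
    Submodule.finrank_mono (Submodule.span_mono (Set.image_mono Set.sdiff_subset))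
  obtain ⟨e, he⟩ : B.Nonempty := Finset.card_pos.1 (by omega)
  have hB1 : rrk d p B + 1 = B.card := by
    have := herase e he
    have := hmono e
    omega
  exact ⟨B, hBD, fun f hf => by have := herase f hf; omega, hB1⟩

theorem IsCircuit.stressSpace_ne_bot (hD : IsCircuit d p D) : stressSpace d p D ≠ ⊥ :=
  fun h => by have := hD.2; rw [stressSpace_eq_bot_iff_rrk.1 h] at this; omega

theorem eq_zero_of_not_monochromatic {x : V} (hx : ¬ Monochromatic d p D 2 x) {l : Sym2 V → ℝ}
    (hl : l ∈ stressSpace d p D) (hstar : ∀ w, l s(x, w) = 0) : l = 0 := by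
  by_contra hl0
  have hsupp : l ∈ stressSpace d p (D.filter (l · ≠ 0)) := by
    refine mem_relationsOn.2 ⟨fun e he => ?_, (mem_relationsOn.1 hl).2⟩
    by_cases heD : e ∈ D
    · simpa [heD] using he
    · exact (mem_relationsOn.1 hl).1 e heD
  obtain ⟨B, hB, hcirc⟩ := exists_isCircuit_subset (Submodule.ne_bot_iff _ |>.2 ⟨l, hsupp, hl0⟩)
  refine hx ⟨D \ B, ⟨B, hB.trans (Finset.filter_subset _ _), hcirc, rfl⟩, fun e he hxe => ?_⟩
  obtain ⟨w, rfl⟩ := Sym2.mem_iff_exists.1 hxe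
  exact Finset.mem_sdiff.2 ⟨he, fun heB => (Finset.mem_filter.1 (hB heB)).2 (hstar w)⟩

theorem injective_weightedLaplacian_of_not_monochromatic (hsimple : ∀ e ∈ D, ¬ e.IsDiag) {x : V}
    (hx : ¬ Monochromatic d p D 2 x) :
    Function.Injective ((weightedLaplacian x).domRestrict (stressSpace d p D)) := by
  rw [injective_iff_map_eq_zero]
  rintro ⟨l, hl⟩ h0
  refine Subtype.ext (eq_zero_of_not_monochromatic hx hl fun w => ?_)
  rcases eq_or_ne w x with rfl | hw
  · exact (mem_relationsOn.1 hl).1 _ fun hD => hsimple _ hD rfl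
  · have hsingle := LinearMap.congr_fun h0 (Pi.single w 1)
    rw [LinearMap.domRestrict_apply, weightedLaplacian_single_of_ne hw] at hsingle
    exact neg_eq_zero.1 hsingle

end Circuits

section Cones

variable {V : Type*} [Fintype V] {d : ℕ}

/-- The realisation of the cone with apex at the origin in which `u` is placed at
`(1, p u) / s u`; up to projective equivalence these are the realisations of the cone which project
from the apex to `p`. -/
noncomputable def coneRealization (p : V → Fin d → ℝ) (s : V → ℝ) : Option V → Fin (d + 1) → ℝ :=
  fun o => o.elim 0 fun u => (s u)⁻¹ • homogenize p u

/-- The projection from the apex of a stress `ω` of `coneRealization p s`. -/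
noncomputable def coneProjection (s : V → ℝ) (ω : Sym2 (Option V) → ℝ) (e : Sym2 V) : ℝ :=
  ω (e.map some) / (e.map s).mul

theorem weightedLaplacian_some {s : V → ℝ} (hs : ∀ u, s u ≠ 0) (ω : Sym2 (Option V) → ℝ)
    (u : V) (a : V → ℝ) :
    weightedLaplacian (some u) ω (fun o => o.elim 0 fun w => (s w)⁻¹ * a w) =
      ω s(some u, none) * ((s u)⁻¹ * a u) + s u * weightedLaplacian u (coneProjection s ω) a -
        a u * weightedLaplacian u (coneProjection s ω) s := by
  simp only [weightedLaplacian_apply, Fintype.sum_option, Finset.mul_sum, add_sub_assoc,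
    ← Finset.sum_sub_distrib, Option.elim, sub_zero]
  congr! 2 with w
  have hu := hs u
  have hw := hs w
  simp only [coneProjection, Sym2.map_mk, Sym2.mul_mk]
  field_simp
  ring

theorem mem_coneEdges_some [DecidableEq V] {D : Finset (Sym2 V)} {e : Sym2 V} :
    e.map some ∈ coneEdges D ↔ e ∈ D := by
  have hapex : e.map some ∉ Finset.univ.image fun u : V => s(some u, none) :=
    e.ind fun a b => by simp
  rw [coneEdges, Finset.mem_union, (Sym2.map.injective (Option.some_injective V)).mem_finset_image,
    or_iff_left hapex]

theorem notMem_coneEdges_none [DecidableEq V] (D : Finset (Sym2 V)) :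
    s(none, none) ∉ coneEdges D := by
  simp [coneEdges, Sym2.forall]

variable [DecidableEq V] {p : V → Fin d → ℝ} {D : Finset (Sym2 V)} {s : V → ℝ}
  {ω : Sym2 (Option V) → ℝ}

theorem weightedLaplacian_coneProjection (hs : ∀ u, s u ≠ 0)
    (hω : ω ∈ stressSpace (d + 1) (coneRealization p s) (coneEdges D)) (u : V) :
    weightedLaplacian u (coneProjection s ω) s = ω s(some u, none) * (s u)⁻¹ := by
  have hzero : weightedLaplacian (some u) ω (fun o => o.elim 0 fun w => (s w)⁻¹ * 1) = 0 := by
    convert (mem_stressSpace.1 hω).2 (some u) 0 with o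
    cases o <;> simp [coneRealization, homogenize]
  rw [weightedLaplacian_some hs, weightedLaplacian_const] at hzero
  linarith

theorem coneProjection_mem_stressSpace (hs : ∀ u, s u ≠ 0)
    (hω : ω ∈ stressSpace (d + 1) (coneRealization p s) (coneEdges D)) :
    coneProjection s ω ∈ stressSpace d p D := by
  refine mem_stressSpace.2 ⟨fun e he => ?_, fun u i => ?_⟩
  · rw [coneProjection, (mem_stressSpace.1 hω).1 _ (mem_coneEdges_some.not.2 he), zero_div]
  · have hzero :
        weightedLaplacian (some u) ω (fun o => o.elim 0 fun w => (s w)⁻¹ * p w i) = 0 := by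
      convert (mem_stressSpace.1 hω).2 (some u) i.succ with o
      cases o <;> simp [coneRealization, homogenize]
    rw [weightedLaplacian_some hs, weightedLaplacian_coneProjection hs hω] at hzero
    refine (mul_eq_zero.1 ?_).resolve_left (hs u)
    linarith

theorem eq_zero_of_coneProjection_eq_zero (hs : ∀ u, s u ≠ 0)
    (hω : ω ∈ stressSpace (d + 1) (coneRealization p s) (coneEdges D))
    (h0 : coneProjection s ω = 0) : ω = 0 := by
  have hapex : ∀ u, ω s(some u, none) = 0 := by
    intro u
    have := weightedLaplacian_coneProjection hs hω u
    simpa [h0, hs u] using this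
  ext e
  induction e with | _ a b
  rcases a with _ | a <;> rcases b with _ | b
  · exact (mem_stressSpace.1 hω).1 _ (notMem_coneEdges_none D)
  · exact Sym2.eq_swap ▸ hapex b
  · exact hapex a
  · simpa [coneProjection, hs] using congrFun h0 s(a, b)

theorem exists_mem_stressSpace_weightedLaplacian_eq_zero {q : Option V → Fin (d + 1) → ℝ}
    (hq : Generic (d + 1) q) {B : Finset (Sym2 (Option V))} (hB : B ⊆ coneEdges D)
    (hdep : stressSpace (d + 1) q B ≠ ⊥) (p : V → Fin d → ℝ) (s : V → ℝ) :
    ∃ l ∈ stressSpace d p D, l ≠ 0 ∧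
      ∀ u, s(some u, none) ∉ B → weightedLaplacian u l s = 0 := by
  -- Adding a constant to `s` makes it nowhere zero and does not change its Laplacians.
  obtain ⟨t, ht⟩ := (Set.finite_range fun u => -s u).exists_notMem
  have hst : ∀ u, (s + fun _ : V => t) u ≠ 0 := fun u h =>
    ht ⟨u, (eq_neg_of_add_eq_zero_right h).symm⟩
  have hspecial : stressSpace (d + 1) (coneRealization p (s + fun _ => t)) B ≠ ⊥ := by
    rw [Ne, relationsOn_eq_bot_iff] at hdep ⊢
    exact mt hq.linearIndepOn_rigRow hdep
  obtain ⟨ω, hωB, hω0⟩ := Submodule.exists_mem_ne_zero_of_ne_bot hspecial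
  have hω := relationsOn_mono hB hωB
  refine ⟨coneProjection _ ω, coneProjection_mem_stressSpace hst hω,
    mt (eq_zero_of_coneProjection_eq_zero hst hω) hω0, fun u hu => ?_⟩
  have hlap := weightedLaplacian_coneProjection hst hω u
  rwa [map_add, weightedLaplacian_const, add_zero, (mem_stressSpace.1 hωB).1 _ hu,
    zero_mul] at hlap

end Cones

section ParallelStars

variable {V : Type*} [Fintype V] [DecidableEq V] {d : ℕ} {p : V → Fin d → ℝ}
  {D : Finset (Sym2 V)}

theorem exists_weightedLaplacian_eq_smul (hsimple : ∀ e ∈ D, ¬ e.IsDiag)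
    (hrank : Module.finrank ℝ (stressSpace d p D) = 2) {x y : V}
    (hx : ¬ Monochromatic d p D 2 x) (hy : ¬ Monochromatic d p D 2 y)
    (hdep : ∀ s, ∃ l ∈ stressSpace d p D, l ≠ 0 ∧
      weightedLaplacian x l s = 0 ∧ weightedLaplacian y l s = 0) :
    ∃ c : ℝ, c ≠ 0 ∧
      ∀ l ∈ stressSpace d p D, weightedLaplacian y l = c • weightedLaplacian x l := by
  let φ (u : V) : (V → ℝ) →ₗ[ℝ] Module.Dual ℝ (stressSpace d p D) :=
    ((weightedLaplacian u).domRestrict (stressSpace d p D)).flip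
  have hφ : Function.Surjective (φ x) := LinearMap.flip_surjective_iff₁.2
    (injective_weightedLaplacian_of_not_monochromatic hsimple hx)
  have hparallel : ∀ s, ¬ LinearIndependent ℝ ![φ x s, φ y s] := by
    intro s
    obtain ⟨l, hl, hl0, hlx, hly⟩ := hdep s
    exact not_linearIndependent_pair_of_apply_eq_zero hrank (l := ⟨l, hl⟩) (by simpa using hl0)
      hlx hly
  obtain ⟨c, hc⟩ := exists_eq_smul_of_forall_not_linearIndependent hφ
    (by rw [Subspace.dual_finrank_eq, hrank]; exact one_lt_two) hparallel
  have hlap : ∀ l ∈ stressSpace d p D, weightedLaplacian y l = c • weightedLaplacian x l :=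
    fun l hl => LinearMap.ext fun s =>
      LinearMap.congr_fun (LinearMap.congr_fun hc s) (⟨l, hl⟩ : stressSpace d p D)
  refine ⟨c, ?_, hlap⟩
  rintro rfl
  have : Nontrivial (stressSpace d p D) := Module.nontrivial_of_finrank_pos (R := ℝ) (by omega)
  obtain ⟨l, hl0⟩ := exists_ne (0 : stressSpace d p D)
  refine hl0 (injective_weightedLaplacian_of_not_monochromatic hsimple hy ?_)
  rw [LinearMap.domRestrict_apply, hlap l l.2, zero_smul, map_zero]

end ParallelStars

section CommonNeighbors

variable {V : Type*} [Fintype V] [DecidableEq V] {d : ℕ} {p : V → Fin d → ℝ}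
  {D : Finset (Sym2 V)} {T : Finset V} {κ : V → ℝ} {x : V}

/-- The common neighbours of the vertices in `T` in the graph with edge set `D`. -/
def commonNeighbors (D : Finset (Sym2 V)) (T : Finset V) : Finset V :=
  Finset.univ.filter fun w => ∀ u ∈ T, s(u, w) ∈ D

theorem mem_commonNeighbors {w : V} : w ∈ commonNeighbors D T ↔ ∀ u ∈ T, s(u, w) ∈ D := by
  simp [commonNeighbors]

theorem notMem_of_mem_commonNeighbors (hsimple : ∀ e ∈ D, ¬ e.IsDiag) {w : V}
    (hw : w ∈ commonNeighbors D T) : w ∉ T := fun hT =>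
  hsimple _ (mem_commonNeighbors.1 hw w hT) rfl

theorem mem_relationsOn_homogenize_of_mem_stressSpace (hsimple : ∀ e ∈ D, ¬ e.IsDiag)
    {l : Sym2 V → ℝ} (hl : l ∈ stressSpace d p D)
    (hlx : weightedLaplacian x l (Pi.single x 1) = 0) {N : Finset V}
    (hN : ∀ w ∉ N, l s(x, w) = 0) :
    (fun w => l s(x, w)) ∈ relationsOn ℝ (homogenize p) N := by
  have hdiag : l s(x, x) = 0 := (mem_stressSpace.1 hl).1 _ fun hD => hsimple _ hD rfl
  have hsum : ∑ w, l s(x, w) = 0 := by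
    rw [← hlx, weightedLaplacian_apply]
    refine Finset.sum_congr rfl fun w _ => ?_
    rcases eq_or_ne w x with rfl | hw <;> simp [*]
  refine mem_relationsOn_homogenize.2 ⟨hN, hsum, fun i => ?_⟩
  have hlap := (mem_stressSpace.1 hl).2 x i
  simpa [weightedLaplacian_apply, mul_sub, ← Finset.sum_mul, hsum] using hlap

theorem lt_card_commonNeighbors (hp : Generic d p) (hsimple : ∀ e ∈ D, ¬ e.IsDiag)
    (hrank : 1 < Module.finrank ℝ (stressSpace d p D)) (hx : ¬ Monochromatic d p D 2 x)
    (hκ : ∀ u ∈ T, κ u ≠ 0)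
    (hlap : ∀ u ∈ T, ∀ l ∈ stressSpace d p D,
      weightedLaplacian u l = κ u • weightedLaplacian x l) :
    d + 1 < (commonNeighbors D T).card := by
  by_contra! hcard
  -- The Laplacian at `x` of the indicator function of `x` is the sum of the weights at `x`.
  obtain ⟨⟨l, hl⟩, hlx, hl0⟩ := Submodule.exists_mem_ne_zero_of_ne_bot <|
    LinearMap.ker_ne_bot_of_finrank_lt
      (f := ((weightedLaplacian x).domRestrict (stressSpace d p D)).flip (Pi.single x 1))
      (by rwa [Module.finrank_self])
  replace hlx : weightedLaplacian x l (Pi.single x 1) = 0 := hlx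
  have hsupp : ∀ w ∉ commonNeighbors D T, l s(x, w) = 0 := by
    intro w hw
    rcases eq_or_ne w x with rfl | hwx
    · exact (mem_stressSpace.1 hl).1 _ fun hD => hsimple _ hD rfl
    by_cases hwT : w ∈ T
    · have h := LinearMap.congr_fun (hlap w hwT l hl) (Pi.single x 1)
      rw [LinearMap.smul_apply, hlx, smul_zero, weightedLaplacian_single_of_ne hwx.symm,
        neg_eq_zero] at h
      exact Sym2.eq_swap ▸ h
    · obtain ⟨u, hu, huw⟩ : ∃ u ∈ T, s(u, w) ∉ D := by
        simpa [mem_commonNeighbors] using hw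
      have h := apply_eq_mul_of_weightedLaplacian_eq_smul (hlap u hu l hl)
        (ne_of_mem_of_not_mem hu hwT).symm hwx
      rw [(mem_stressSpace.1 hl).1 _ huw] at h
      exact (mul_eq_zero.1 h.symm).resolve_left (hκ u hu)
  have hrel := mem_relationsOn_homogenize_of_mem_stressSpace hsimple hl hlx hsupp
  rw [relationsOn_eq_bot_iff.2 (hp.linearIndepOn_homogenize hcard), Submodule.mem_bot] at hrel
  exact hl0 (Subtype.ext (eq_zero_of_not_monochromatic hx hl (congrFun hrel)))

end CommonNeighbors

section RankOneStresses

theorem exists_forall_sum_mul_eq_zero {V : Type*} [Fintype V] {T N : Finset V}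
    (hcard : T.card.choose 2 < N.card) (g : V → V → ℝ) :
    ∃ τ : V → ℝ, τ ≠ 0 ∧ (∀ w ∉ N, τ w = 0) ∧
      ∀ u ∈ T, ∀ v ∈ T, u ≠ v → ∑ w, τ w * (g w u * g w v) = 0 := by
  classical
  let P : Finset (Sym2 V) := T.offDiag.image (Function.uncurry Sym2.mk)
  have hP : Module.finrank ℝ (P → ℝ) < N.card := by
    rwa [Module.finrank_fintype_fun_eq_card, Fintype.card_coe, Sym2.card_image_offDiag]
  obtain ⟨τ, hτ, hτ0⟩ := Submodule.exists_mem_ne_zero_of_ne_bot <|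
    relationsOn_ne_bot_of_finrank_lt_card (K := ℝ)
      (v := fun (w : V) (e : P) => (e.1.map (g w)).mul) hP
  obtain ⟨hsupp, hrel⟩ := mem_relationsOn.1 hτ
  refine ⟨τ, hτ0, hsupp, fun u hu v hv huv => ?_⟩
  have huvP : s(u, v) ∈ P :=
    Finset.mem_image.2 ⟨(u, v), Finset.mem_offDiag.2 ⟨hu, hv, huv⟩, rfl⟩
  simpa using congrFun hrel ⟨_, huvP⟩

variable {V : Type*} [Fintype V] [DecidableEq V] {d : ℕ} {p : V → Fin d → ℝ}
  {D : Finset (Sym2 V)} {T : Finset V} {g : V → V → ℝ} {τ : V → ℝ}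

theorem rankOneStress_mem_stressSpace {g : V → ℝ} {A : Finset V}
    (hg : g ∈ relationsOn ℝ (homogenize p) A) {E : Finset (Sym2 V)}
    (hE : ∀ u ∈ A, ∀ v ∈ A, u ≠ v → s(u, v) ∈ E) : rankOneStress g ∈ stressSpace d p E := by
  obtain ⟨hsupp, hsum, hcoord⟩ := mem_relationsOn_homogenize.1 hg
  rw [mem_stressSpace]
  constructor
  · refine Sym2.ind fun u v huv => ?_
    rcases eq_or_ne u v with rfl | hne
    · simp [rankOneStress]
    rw [rankOneStress_mk_of_ne _ hne, neg_eq_zero]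
    by_cases hu : u ∈ A
    · rw [hsupp v fun hv => huv (hE u hu v hv hne), mul_zero]
    · rw [hsupp u hu, zero_mul]
  · intro u i
    rw [weightedLaplacian_rankOneStress hsum, hcoord i, mul_zero]

theorem sum_smul_rankOneStress_mem_stressSpace
    (hg : ∀ w ∈ commonNeighbors D T, g w ∈ relationsOn ℝ (homogenize p) (insert w T))
    (hτ : ∀ w ∉ commonNeighbors D T, τ w = 0)
    (hT : ∀ u ∈ T, ∀ v ∈ T, u ≠ v → ∑ w, τ w * (g w u * g w v) = 0) :
    ∑ w, τ w • rankOneStress (g w) ∈ stressSpace d p D := by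
  have hmem : ∑ w, τ w • rankOneStress (g w) ∈ stressSpace d p (D ∪ T.sym2) := by
    refine Submodule.sum_mem _ fun w _ => ?_
    by_cases hw : w ∈ commonNeighbors D T
    · refine Submodule.smul_mem _ _ (rankOneStress_mem_stressSpace (hg w hw) ?_)
      have hstar := mem_commonNeighbors.1 hw
      intro u hu v hv huv
      rw [Finset.mem_union, Finset.mk_mem_sym2_iff]
      rcases Finset.mem_insert.1 hu with rfl | huT <;> rcases Finset.mem_insert.1 hv with rfl | hvT
      · exact absurd rfl huv
      · exact Or.inl (Sym2.eq_swap ▸ hstar v hvT)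
      · exact Or.inl (hstar u huT)
      · exact Or.inr ⟨huT, hvT⟩
    · rw [hτ w hw, zero_smul]
      exact Submodule.zero_mem _
  refine mem_stressSpace.2 ⟨Sym2.ind fun u v huv => ?_, (mem_stressSpace.1 hmem).2⟩
  by_cases huvT : u ∈ T ∧ v ∈ T
  · rcases eq_or_ne u v with rfl | hne
    · simp [rankOneStress, Finset.sum_apply]
    · simpa [Finset.sum_apply, rankOneStress_mk_of_ne _ hne] using hT u huvT.1 v huvT.2 hne
  · exact (mem_stressSpace.1 hmem).1 _ (by simp [huv, huvT])

theorem sum_smul_rankOneStress_apply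
    (hg : ∀ w ∈ commonNeighbors D T, g w ∈ relationsOn ℝ (homogenize p) (insert w T))
    (hτ : ∀ w ∉ commonNeighbors D T, τ w = 0) {u w : V} (huw : u ≠ w) (hw : w ∉ T) :
    (∑ w', τ w' • rankOneStress (g w')) s(u, w) = -(τ w * (g w u * g w w)) := by
  rw [Finset.sum_apply, Finset.sum_eq_single w _ (by simp), Pi.smul_apply,
    rankOneStress_mk_of_ne _ huw, smul_eq_mul, mul_neg]
  intro w' _ hne
  by_cases hw' : w' ∈ commonNeighbors D T
  · have h0 : g w' w = 0 :=
      (mem_relationsOn_homogenize.1 (hg w' hw')).1 w (by simp [hne.symm, hw])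
    simp [rankOneStress_mk_of_ne _ huw, h0]
  · simp [hτ w' hw']

theorem sum_smul_homogenize_eq {κ g : V → ℝ} {w : V} {k : ℝ} (hw : w ∉ T)
    (hg : g ∈ relationsOn ℝ (homogenize p) (insert w T)) (hgw : g w ≠ 0)
    (hκ : ∀ u ∈ T, g u = κ u * k) :
    ∑ u ∈ T, κ u ≠ 0 ∧ (∑ u ∈ T, κ u) • homogenize p w = ∑ u ∈ T, κ u • homogenize p u := by
  have hrel : g w • homogenize p w + ∑ u ∈ T, (κ u * k) • homogenize p u = 0 := by
    rw [Finset.sum_congr rfl fun u hu => by rw [← hκ u hu],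
      ← Finset.sum_insert (f := fun u => g u • homogenize p u) hw, ← (mem_relationsOn.1 hg).2]
    exact Finset.sum_subset (Finset.subset_univ _) fun v _ hv => by
      rw [(mem_relationsOn.1 hg).1 v hv, zero_smul]
  have hgk : g w = -((∑ u ∈ T, κ u) * k) := by
    rw [Finset.sum_mul, eq_neg_iff_add_eq_zero]
    simpa [homogenize] using congrFun hrel 0
  have hk : k ≠ 0 := by
    rintro rfl
    exact hgw (by simpa using hgk)
  refine ⟨fun h0 => hgw (by simpa [h0] using hgk), smul_right_injective _ hk ?_⟩
  simp only [hgk, mul_comm _ k, neg_smul, mul_smul, ← Finset.smul_sum] at hrel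
  exact neg_add_eq_zero.1 hrel

theorem Generic.homogenize_injective (hd : 0 < d) {V : Type*} {p : V → Fin d → ℝ}
    (hp : Generic d p) : Function.Injective (homogenize p) := by
  intro u v huv
  have h : p u ⟨0, hd⟩ = p v ⟨0, hd⟩ := congrFun huv (Fin.succ ⟨0, hd⟩)
  exact congrArg Prod.fst (AlgebraicIndependent.injective hp (a₁ := (u, _)) (a₂ := (v, _)) h)

theorem exists_forall_ne_eq_zero_of_weightedLaplacian_eq_smul (hd : 0 < d) (hp : Generic d p)
    (hsimple : ∀ e ∈ D, ¬ e.IsDiag)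
    (hg : ∀ w ∈ commonNeighbors D T, g w ∈ relationsOn ℝ (homogenize p) (insert w T))
    (hgw : ∀ w ∈ commonNeighbors D T, g w w ≠ 0)
    (hτ0 : τ ≠ 0) (hτ : ∀ w ∉ commonNeighbors D T, τ w = 0) {κ : V → ℝ} {x : V} (hx : x ∈ T)
    (hlap : ∀ u ∈ T, weightedLaplacian u (∑ w, τ w • rankOneStress (g w)) =
      κ u • weightedLaplacian x (∑ w, τ w • rankOneStress (g w))) :
    ∃ w, τ w ≠ 0 ∧ ∀ w', w' ≠ w → τ w' = 0 := by
  have hmem : ∀ w, τ w ≠ 0 → w ∈ commonNeighbors D T := fun w => not_imp_comm.1 (hτ w)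
  have hwT : ∀ w, τ w ≠ 0 → w ∉ T := fun w hw =>
    notMem_of_mem_commonNeighbors hsimple (hmem w hw)
  have hpoint : ∀ w, τ w ≠ 0 → ∑ u ∈ T, κ u ≠ 0 ∧
      (∑ u ∈ T, κ u) • homogenize p w = ∑ u ∈ T, κ u • homogenize p u := by
    intro w hw
    have hne : ∀ u ∈ T, u ≠ w := fun u hu => ne_of_mem_of_not_mem hu (hwT w hw)
    refine sum_smul_homogenize_eq (k := g w x) (hwT w hw) (hg w (hmem w hw)) (hgw w (hmem w hw))
      fun u hu => ?_
    have h := apply_eq_mul_of_weightedLaplacian_eq_smul (hlap u hu) (hne u hu).symm (hne x hx).symm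
    rw [sum_smul_rankOneStress_apply hg hτ (hne u hu) (hwT w hw),
      sum_smul_rankOneStress_apply hg hτ (hne x hx) (hwT w hw)] at h
    refine mul_left_cancel₀ (mul_ne_zero hw (hgw w (hmem w hw))) ?_
    linear_combination -h
  obtain ⟨w, hw⟩ := Function.ne_iff.1 hτ0
  refine ⟨w, hw, fun w' hne => ?_⟩
  by_contra hw'
  exact hne (hp.homogenize_injective hd (smul_right_injective _ (hpoint w hw).1
    ((hpoint w' hw').2.trans (hpoint w hw).2.symm)))

theorem card_commonNeighbors_le (hd : 0 < d) (hp : Generic d p) (hsimple : ∀ e ∈ D, ¬ e.IsDiag)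
    (hT : T.card = d + 1) {κ : V → ℝ} {x : V} (hx : x ∈ T)
    (hlap : ∀ u ∈ T, ∀ l ∈ stressSpace d p D,
      weightedLaplacian u l = κ u • weightedLaplacian x l) :
    (commonNeighbors D T).card ≤ (d + 1).choose 2 := by
  by_contra! hcard
  have hex : ∀ w : V, ∃ g : V → ℝ, w ∈ commonNeighbors D T →
      g ∈ relationsOn ℝ (homogenize p) (insert w T) ∧ ∀ v ∈ insert w T, g v ≠ 0 := by
    intro w
    by_cases hw : w ∈ commonNeighbors D T
    · have hcardw : (insert w T).card = d + 2 := by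
        rw [Finset.card_insert_of_notMem (notMem_of_mem_commonNeighbors hsimple hw), hT]
      obtain ⟨g, hg, hg0⟩ := hp.exists_mem_relationsOn_homogenize_forall_ne_zero hcardw
      exact ⟨g, fun _ => ⟨hg, hg0⟩⟩
    · exact ⟨0, fun h => absurd h hw⟩
  choose g hg using hex
  obtain ⟨τ, hτ0, hτ, hcancel⟩ := exists_forall_sum_mul_eq_zero (hT ▸ hcard) g
  obtain ⟨w, hw, huniq⟩ := exists_forall_ne_eq_zero_of_weightedLaplacian_eq_smul hd hp hsimple
    (fun w hw => (hg w hw).1) (fun w hw => (hg w hw).2 w (Finset.mem_insert_self w T)) hτ0 hτ hx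
    fun u hu => hlap u hu _ <|
      sum_smul_rankOneStress_mem_stressSpace (fun w hw => (hg w hw).1) hτ hcancel
  obtain ⟨y, hy, hyx⟩ := Finset.exists_mem_ne (by omega : 1 < T.card) x
  have hne : ∀ u ∈ T, g w u ≠ 0 := fun u hu =>
    (hg w (not_imp_comm.1 (hτ w) hw)).2 u (Finset.mem_insert_of_mem hu)
  have hxy := hcancel x hx y hy hyx.symm
  rw [Fintype.sum_eq_single w fun w' hw' => by rw [huniq w' hw', zero_mul]] at hxy
  exact mul_ne_zero hw (mul_ne_zero (hne x hx) (hne y hy)) hxy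

end RankOneStresses
theorem cone_double_circuit_three_technicolour_general
    {V : Type*} [Fintype V] [DecidableEq V] {d : ℕ} (hd : 0 < d) (hd2 : d ≤ 2)
    (D : Finset (Sym2 V)) (hsimple : ∀ e ∈ D, ¬ e.IsDiag)
    (p : V → Fin d → ℝ) (hp : Generic d p)
    (q : Option V → Fin (d + 1) → ℝ) (hq : Generic (d + 1) q)
    (hD : rrk d p D + 2 = D.card)
    (T : Finset V) (hT : T.card = d + 1) (htech : ∀ u ∈ T, ¬ Monochromatic d p D 2 u) :
    ¬ ∃ A' : Finset (Sym2 (Option V)),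
        IsPrincipalPart (d + 1) q (coneEdges D) 2 A' ∧ ∀ u ∈ T, s(some u, none) ∈ A' := by
  rintro ⟨_, ⟨B, hB, hcirc, rfl⟩, hA⟩
  have hBT : ∀ u ∈ T, s(some u, none) ∉ B := fun u hu => (Finset.mem_sdiff.1 (hA u hu)).2
  have hrank : Module.finrank ℝ (stressSpace d p D) = 2 := by
    have := rrk_add_finrank_stressSpace p D
    omega
  obtain ⟨x, hx⟩ : T.Nonempty := Finset.card_pos.1 (by omega)
  have hparallel : ∀ u ∈ T, ∃ c : ℝ, c ≠ 0 ∧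
      ∀ l ∈ stressSpace d p D, weightedLaplacian u l = c • weightedLaplacian x l := by
    refine fun u hu => exists_weightedLaplacian_eq_smul hsimple hrank (htech x hx) (htech u hu)
      fun s => ?_
    obtain ⟨l, hl, hl0, hlap⟩ :=
      exists_mem_stressSpace_weightedLaplacian_eq_zero hq hB
        (IsCircuit.stressSpace_ne_bot hcirc) p s
    exact ⟨l, hl, hl0, hlap x (hBT x hx), hlap u (hBT u hu)⟩
  choose! κ hκ hlap using hparallel
  have hlower : d + 1 < (commonNeighbors D T).card :=
    lt_card_commonNeighbors hp hsimple (by omega) (htech x hx) hκ hlap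
  have hupper := card_commonNeighbors_le hd hp hsimple hT hx hlap
  have hchoose : (d + 1).choose 2 ≤ d + 1 := by interval_cases d <;> decide
  omega

/-- Lemma 4.6: in the cone of a double `R_2`-circuit, the cone edges at three
technicolour vertices cannot all lie in the same part of the principal partition. -/
theorem cone_double_circuit_three_technicolour
    {V : Type*} [Fintype V] [DecidableEq V]
    (D : Finset (Sym2 V)) (hsimple : ∀ e ∈ D, ¬ e.IsDiag)
    (hcov : ∀ w : V, ∃ e ∈ D, w ∈ e)
    (p : V → Fin 2 → ℝ) (hp : Generic 2 p)
    (q : Option V → Fin 3 → ℝ) (hq : Generic 3 q)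
    (hD : IsKFoldCircuit 2 p D 2)
    (x y z : V) (hxy : x ≠ y) (hxz : x ≠ z) (hyz : y ≠ z)
    (htx : ¬ Monochromatic 2 p D 2 x) (hty : ¬ Monochromatic 2 p D 2 y)
    (htz : ¬ Monochromatic 2 p D 2 z) :
    ¬ ∃ A' : Finset (Sym2 (Option V)),
        IsPrincipalPart 3 q (coneEdges D) 2 A' ∧
        s((Option.some x : Option V), (none : Option V)) ∈ A' ∧
        s((Option.some y : Option V), (none : Option V)) ∈ A' ∧
        s((Option.some z : Option V), (none : Option V)) ∈ A' := by
  simpa using cone_double_circuit_three_technicolour_general two_pos le_rfl D hsimple p hp q hq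
    hD.2 {x, y, z} (Finset.card_eq_three.2 ⟨x, y, z, hxy, hxz, hyz, rfl⟩)
    (by simp [htx, hty, htz])
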